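/- The map Ω : PPU(b)⁻ → Sub(V⊕) is surjective: for every finitely generated k[t⁻¹]-submodule U of V⊕ there exists φ ∈ PPU(b)⁻ whose induced endomorphism of V⊕ has kernel exactly U. -/

import Mathlib

open Finsupp

variable (k : Type*) [Field k] (V : Type*) [AddCommGroup V] [Module k V]

/-- Multiplication by `t^n` on `V[t,t⁻¹] := ℤ →₀ V` (writing `v = ∑ᵢ tⁱ vᵢ` as the
finitely supported function `i ↦ vᵢ`). -/
noncomputable def shift (n : ℤ) : (ℤ →₀ V) ≃ₗ[k] (ℤ →₀ V) :=
  Finsupp.domLCongr (Equiv.addRight n)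

/-- The coefficient of `tⁿ` of `b̃(v,w) = ∑ₙ tⁿ (∑ᵢ b(v_{i-n}, w_i))`. -/
noncomputable def Btilde (b : LinearMap.BilinForm k V) (n : ℤ) (v w : ℤ →₀ V) : k :=
  w.sum fun i wi => b (v (i - n)) wi

/-- `φ` is a paraunitary transformation: an invertible `k[t,t⁻¹]`-linear
(i.e. `k`-linear and commuting with multiplication by `t`) endomorphism of
`V[t,t⁻¹]` preserving `b̃`. -/
def IsPU (b : LinearMap.BilinForm k V) (φ : (ℤ →₀ V) ≃ₗ[k] (ℤ →₀ V)) : Prop :=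
  (∀ v, φ (shift k V 1 v) = shift k V 1 (φ v)) ∧
  ∀ (n : ℤ) (v w : ℤ →₀ V), Btilde k V b n (φ v) (φ w) = Btilde k V b n v w

/-- The specialization `t = 1` of a `k[t,t⁻¹]`-linear endomorphism `f = ∑ᵢ tⁱ fᵢ`
of `V[t,t⁻¹]`, i.e. the endomorphism `ε₁(f) = ∑ᵢ fᵢ` of `V`. -/
noncomputable def eps (f : (ℤ →₀ V) →ₗ[k] (ℤ →₀ V)) : V →ₗ[k] V :=
  (Finsupp.lsum k fun _ : ℤ => (LinearMap.id : V →ₗ[k] V)) ∘ₗ f ∘ₗ Finsupp.lsingle 0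

/-- `φ` is pure paraunitary: paraunitary and specializing to the identity at `t = 1`. -/
def IsPPU (b : LinearMap.BilinForm k V) (φ : (ℤ →₀ V) ≃ₗ[k] (ℤ →₀ V)) : Prop :=
  IsPU k V b φ ∧ eps k V (φ : (ℤ →₀ V) →ₗ[k] (ℤ →₀ V)) = LinearMap.id

/-- `φ ∈ PPU(b)⁻`: pure paraunitary and all Laurent coefficients `φᵢ` for `i > 0` vanish. -/
def PPUneg (b : LinearMap.BilinForm k V) (φ : (ℤ →₀ V) ≃ₗ[k] (ℤ →₀ V)) : Prop :=
  IsPPU k V b φ ∧ ∀ (x : V) (i : ℤ), 0 < i → φ (Finsupp.single 0 x) i = 0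

/-- `V[t⁻¹] ⊆ V[t,t⁻¹]`: the elements with `vᵢ = 0` for `i > 0`. -/
def Vneg : Submodule k (ℤ →₀ V) where
  carrier := {v | ∀ i : ℤ, 0 < i → v i = 0}
  add_mem' := by
    intro a c ha hc i hi
    simp only [Set.mem_setOf_eq] at *
    simp [Finsupp.add_apply, ha i hi, hc i hi]
  zero_mem' := by intro i _; rfl
  smul_mem' := by
    intro c x hx i hi
    simp only [Set.mem_setOf_eq] at *
    simp [Finsupp.smul_apply, hx i hi]

/-- Multiplication by `t⁻¹` descends to the quotient `V⊕ = V[t,t⁻¹]/V[t⁻¹]`,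
making `V⊕` a module over `k[t⁻¹]`. -/
noncomputable def shiftQ : ((ℤ →₀ V) ⧸ Vneg k V) →ₗ[k] ((ℤ →₀ V) ⧸ Vneg k V) :=
  Submodule.mapQ (Vneg k V) (Vneg k V) (shift k V (-1)).toLinearMap (by
    intro v hv i hi
    have h : (shift k V (-1)).toLinearMap v i = v (i + 1) := by
      simp [shift, Finsupp.domLCongr_apply, Finsupp.equivMapDomain_apply]
    rw [h]
    exact hv (i + 1) (by omega))

/-- A finitely generated `k[t⁻¹]`-submodule of `V⊕`: the `k`-span of the
`k[t⁻¹]`-orbit (under multiplication by powers of `t⁻¹`) of a finite set. -/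
def FGSubQ (U : Submodule k ((ℤ →₀ V) ⧸ Vneg k V)) : Prop :=
  ∃ S : Finset ((ℤ →₀ V) ⧸ Vneg k V),
    U = Submodule.span k {x | ∃ s ∈ S, ∃ n : ℕ, x = (shiftQ k V ^ n) s}

/-!
For an orthogonal projection `p` of `V`, the map `(1 - p) + t⁻¹ p` is pure paraunitary, and it
induces on `V⊕` an endomorphism whose kernel is `t · range p`. Since `t⁻¹` is locally nilpotent on
`V⊕`, a finitely generated `k[t⁻¹]`-submodule `U` is finite-dimensional over `k`, and if `U ≠ 0` it
contains some `t w ≠ 0`. Anisotropy provides the orthogonal projection `p` onto `k w`; the induced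
endomorphism has kernel `k · t w ⊆ U`, so it maps `U` to a submodule of smaller dimension, and
`U` is the full preimage of its image. By induction that image is the kernel of some `φ`, and `U`
is the kernel of `φ ∘ ((1 - p) + t⁻¹ p)`.
-/

section EndomorphismOrbits

variable {R M : Type*} [Semiring R] [AddCommMonoid M] [Module R M] {f : Module.End R M}

lemma fg_span_orbit {S : Set M} (hS : S.Finite) (hf : ∀ s ∈ S, ∃ n : ℕ, (f ^ n) s = 0) :
    (Submodule.span R {x | ∃ s ∈ S, ∃ n : ℕ, x = (f ^ n) s}).FG := by
  choose! N hN using hf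
  have hfin : (⋃ s ∈ S, insert 0 ((fun n : ℕ => (f ^ n) s) '' Set.Iio (N s))).Finite :=
    hS.biUnion fun s _ => ((Set.finite_Iio _).image _).insert _
  refine Submodule.fg_span (hfin.subset ?_)
  rintro _ ⟨s, hs, n, rfl⟩
  refine Set.mem_biUnion hs ?_
  rcases lt_or_ge n (N s) with hn | hn
  · exact Or.inr ⟨n, hn, rfl⟩
  · exact Or.inl (Module.End.pow_map_zero_of_le hn (hN s hs))

lemma span_orbit_mem_invtSubmodule (S : Set M) :
    Submodule.span R {x | ∃ s ∈ S, ∃ n : ℕ, x = (f ^ n) s} ∈ f.invtSubmodule := by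
  rw [Module.End.mem_invtSubmodule, Submodule.span_le]
  rintro _ ⟨s, hs, n, rfl⟩
  exact Submodule.subset_span ⟨s, hs, n + 1, by rw [pow_succ', Module.End.mul_apply]⟩

lemma exists_mem_ker_of_pow_apply_eq_zero {U : Submodule R M} (hU : U ∈ f.invtSubmodule)
    {n : ℕ} {u : M} (hu : u ∈ U) (hu0 : u ≠ 0) (hn : (f ^ n) u = 0) :
    ∃ x ∈ U, x ≠ 0 ∧ f x = 0 := by
  induction n generalizing u with
  | zero => exact absurd hn hu0
  | succ n ih =>
    by_cases hfu : f u = 0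
    · exact ⟨u, hu, hu0, hfu⟩
    · exact ih (hU hu) hfu (by rwa [pow_succ, Module.End.mul_apply] at hn)

end EndomorphismOrbits

lemma finrank_map_lt_of_mem_ker {K M N : Type*} [DivisionRing K] [AddCommGroup M] [Module K M]
    [AddCommGroup N] [Module K N] {f : M →ₗ[K] N} {U : Submodule K M} [FiniteDimensional K U]
    {x : M} (hxU : x ∈ U) (hx0 : x ≠ 0) (hfx : f x = 0) :
    Module.finrank K (U.map f) < Module.finrank K U := by
  have hker : LinearMap.ker (f.domRestrict U) ≠ ⊥ :=
    (Submodule.ne_bot_iff _).2 ⟨⟨x, hxU⟩, hfx, fun h => hx0 (congrArg Subtype.val h)⟩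
  have hpos := Submodule.one_le_finrank_iff.2 hker
  have hadd := (f.domRestrict U).finrank_range_add_finrank_ker
  rw [LinearMap.range_domRestrict] at hadd
  omega

lemma exists_isSelfAdjoint_projection_span_singleton {K M : Type*} [Field K] [AddCommGroup M]
    [Module K M] {b : LinearMap.BilinForm K M} (hb : b.IsSymm) {w : M} (hw : b w w ≠ 0) :
    ∃ p : Module.End K M,
      IsIdempotentElem p ∧ b.IsSelfAdjoint p ∧ LinearMap.range p = K ∙ w := by
  let p : Module.End K M := ((b w w)⁻¹ • b w).smulRight w
  have hp (x : M) : p x = ((b w w)⁻¹ * b w x) • w := rfl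
  refine ⟨p, LinearMap.ext fun x => ?_, fun x y => ?_, le_antisymm ?_ ?_⟩
  · simp only [Module.End.mul_apply, hp, map_smul, smul_eq_mul]
    field_simp
  · simp only [hp, map_smul, LinearMap.smul_apply, smul_eq_mul, hb.eq x w]
    ring
  · rintro _ ⟨x, rfl⟩
    exact Submodule.smul_mem _ _ (Submodule.mem_span_singleton_self w)
  · rw [Submodule.span_singleton_le_iff_mem]
    exact ⟨w, by rw [hp, inv_mul_cancel₀ hw, one_smul]⟩

section Shift

variable {k V}

lemma shift_apply (n : ℤ) (v : ℤ →₀ V) (i : ℤ) : shift k V n v i = v (i - n) := by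
  simp [shift, Finsupp.domLCongr_apply, Finsupp.equivMapDomain_apply, sub_eq_add_neg]

lemma shift_single (n i : ℤ) (x : V) :
    shift k V n (Finsupp.single i x) = Finsupp.single (i + n) x :=
  Finsupp.domLCongr_single (Equiv.addRight n) i x

lemma shift_zero (v : ℤ →₀ V) : shift k V 0 v = v := by
  ext i
  rw [shift_apply, sub_zero]

lemma shift_shift (m n : ℤ) (v : ℤ →₀ V) :
    shift k V m (shift k V n v) = shift k V (m + n) v := by
  ext i
  simp only [shift_apply, sub_sub]

lemma Btilde_add_left (b : LinearMap.BilinForm k V) (n : ℤ) (v v' w : ℤ →₀ V) :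
    Btilde k V b n (v + v') w = Btilde k V b n v w + Btilde k V b n v' w := by
  simp [Btilde, Finsupp.sum_add]

lemma Btilde_add_right (b : LinearMap.BilinForm k V) (n : ℤ) (v w w' : ℤ →₀ V) :
    Btilde k V b n v (w + w') = Btilde k V b n v w + Btilde k V b n v w' :=
  Finsupp.sum_add_index' (by simp) (by simp)

lemma Btilde_shift_left (b : LinearMap.BilinForm k V) (n m : ℤ) (v w : ℤ →₀ V) :
    Btilde k V b n (shift k V m v) w = Btilde k V b (n + m) v w := by
  simp only [Btilde, shift_apply, sub_sub]

lemma Btilde_shift_right (b : LinearMap.BilinForm k V) (n m : ℤ) (v w : ℤ →₀ V) :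
    Btilde k V b n v (shift k V m w) = Btilde k V b (n - m) v w := by
  have hshift : shift k V m w = Finsupp.equivMapDomain (Equiv.addRight m) w := rfl
  simp only [Btilde, hshift, Finsupp.sum_equivMapDomain, Equiv.coe_addRight, sub_sub_eq_add_sub]

lemma Btilde_mapRange_eq_zero {b : LinearMap.BilinForm k V} {f g : Module.End k V}
    (hfg : ∀ x y, b (f x) (g y) = 0) (n : ℤ) (v w : ℤ →₀ V) :
    Btilde k V b n (mapRange.linearMap f v) (mapRange.linearMap g w) = 0 := by
  simp [Btilde, Finsupp.sum_mapRange_index, hfg]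

end Shift

section EvalOne

/-- The value `∑ᵢ vᵢ` at `t = 1` of `v = ∑ᵢ tⁱ vᵢ`. -/
noncomputable def evalOne : (ℤ →₀ V) →ₗ[k] V :=
  Finsupp.lsum k fun _ => LinearMap.id

variable {k V}

lemma evalOne_single (i : ℤ) (x : V) : evalOne k V (Finsupp.single i x) = x := by
  simp [evalOne]

lemma evalOne_shift (n : ℤ) (v : ℤ →₀ V) : evalOne k V (shift k V n v) = evalOne k V v := by
  induction v using Finsupp.induction_linear with
  | zero => simp
  | add v w hv hw => simp only [map_add, hv, hw]
  | single i x => simp only [shift_single, evalOne_single]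

lemma eps_apply (f : (ℤ →₀ V) →ₗ[k] (ℤ →₀ V)) (x : V) :
    eps k V f x = evalOne k V (f (Finsupp.single 0 x)) := rfl

lemma evalOne_apply_eq_eps {f : (ℤ →₀ V) →ₗ[k] (ℤ →₀ V)}
    (hf : ∀ v, f (shift k V 1 v) = shift k V 1 (f v)) (v : ℤ →₀ V) :
    evalOne k V (f v) = eps k V f (evalOne k V v) := by
  induction v using Finsupp.induction_linear with
  | zero => simp
  | add v w hv hw => simp only [map_add, hv, hw]
  | single i x =>
    have hper : Function.Periodic (fun i : ℤ => evalOne k V (f (Finsupp.single i x))) 1 :=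
      fun i => by simp only [← shift_single (k := k), hf, evalOne_shift]
    simpa only [evalOne_single, eps_apply, Int.cast_id, mul_one] using hper.int_mul_eq i

end EvalOne

section Paraunitary

variable {k V} {b : LinearMap.BilinForm k V} {φ ψ : (ℤ →₀ V) ≃ₗ[k] (ℤ →₀ V)}

lemma IsPU.trans (hφ : IsPU k V b φ) (hψ : IsPU k V b ψ) : IsPU k V b (φ.trans ψ) :=
  ⟨fun v => by simp only [LinearEquiv.trans_apply, hφ.1, hψ.1],
    fun n v w => by simp only [LinearEquiv.trans_apply, hφ.2, hψ.2]⟩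

lemma IsPPU.refl : IsPPU k V b (LinearEquiv.refl k _) :=
  ⟨⟨fun _ => rfl, fun _ _ _ => rfl⟩, LinearMap.ext fun x => evalOne_single 0 x⟩

lemma IsPPU.trans (hφ : IsPPU k V b φ) (hψ : IsPPU k V b ψ) : IsPPU k V b (φ.trans ψ) := by
  refine ⟨hφ.1.trans hψ.1, LinearMap.ext fun x => ?_⟩
  calc evalOne k V (ψ (φ (Finsupp.single 0 x)))
      = eps k V ψ.toLinearMap (evalOne k V (φ (Finsupp.single 0 x))) :=
        evalOne_apply_eq_eps (f := ψ.toLinearMap) hψ.1.1 _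
    _ = eps k V ψ.toLinearMap (eps k V φ.toLinearMap x) := rfl
    _ = x := by rw [hφ.2, hψ.2]; rfl

end Paraunitary

section ProjShift

variable {k V}

/-- The endomorphism `(1 - p) + tⁿ p` of `V[t,t⁻¹]`. For `p` an orthogonal projection these are the
elementary paraunitary transformations. -/
noncomputable def projShift (p : Module.End k V) (n : ℤ) : Module.End k (ℤ →₀ V) :=
  mapRange.linearMap (1 - p) + (shift k V n).toLinearMap ∘ₗ mapRange.linearMap p

variable {p : Module.End k V}

lemma projShift_eq (n : ℤ) (v : ℤ →₀ V) :
    projShift p n v =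
      mapRange.linearMap (1 - p) v + shift k V n (mapRange.linearMap p v) := rfl

lemma projShift_apply (n : ℤ) (v : ℤ →₀ V) (i : ℤ) :
    projShift p n v i = v i - p (v i) + p (v (i - n)) := by
  simp [projShift_eq, shift_apply]

lemma projShift_zero : projShift p 0 = 1 := by
  refine LinearMap.ext fun v => Finsupp.ext fun i => ?_
  simp [projShift_apply]

lemma projShift_comp (hp : IsIdempotentElem p) (m n : ℤ) :
    projShift p m ∘ₗ projShift p n = projShift p (m + n) := by
  have hpp (x : V) : p (p x) = p x := LinearMap.congr_fun hp x
  refine LinearMap.ext fun v => Finsupp.ext fun i => ?_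
  simp [projShift_apply, hpp, sub_sub]

lemma projShift_shift (m n : ℤ) (v : ℤ →₀ V) :
    projShift p n (shift k V m v) = shift k V m (projShift p n v) := by
  ext i
  simp only [projShift_apply, shift_apply, sub_right_comm]

lemma evalOne_projShift (n : ℤ) (v : ℤ →₀ V) :
    evalOne k V (projShift p n v) = evalOne k V v := by
  calc evalOne k V (projShift p n v)
      = evalOne k V (projShift p 0 v) := by simp only [projShift_eq, map_add, evalOne_shift]
    _ = evalOne k V v := by rw [projShift_zero, Module.End.one_apply]

lemma Btilde_projShift {b : LinearMap.BilinForm k V} (hp : IsIdempotentElem p)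
    (hb : b.IsSelfAdjoint p) (m n : ℤ) (v w : ℤ →₀ V) :
    Btilde k V b n (projShift p m v) (projShift p m w) = Btilde k V b n v w := by
  have hpp (x : V) : p (p x) = p x := LinearMap.congr_fun hp x
  have hqp (x y : V) : b ((1 - p) x) (p y) = 0 := by
    simp [hb x (p y), hpp]
  have hpq (x y : V) : b (p x) ((1 - p) y) = 0 := by
    rw [hb]
    simp [hpp]
  have hsplit (m : ℤ) : Btilde k V b n (projShift p m v) (projShift p m w) =
      Btilde k V b n (mapRange.linearMap (1 - p) v) (mapRange.linearMap (1 - p) w) +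
        Btilde k V b n (mapRange.linearMap p v) (mapRange.linearMap p w) := by
    simp only [projShift_eq, Btilde_add_left, Btilde_add_right, Btilde_shift_left,
      Btilde_shift_right, Btilde_mapRange_eq_zero hqp, Btilde_mapRange_eq_zero hpq,
      add_zero, zero_add, sub_add_cancel]
  -- `hsplit` shows that the form does not depend on `m`, so compare with `m = 0`.
  rw [hsplit m, ← hsplit 0, projShift_zero, Module.End.one_apply, Module.End.one_apply]

/-- `(1 - p) + tⁿ p` as an automorphism of `V[t,t⁻¹]`, for `p` idempotent. -/
noncomputable def projShiftEquiv (hp : IsIdempotentElem p) (n : ℤ) : (ℤ →₀ V) ≃ₗ[k] (ℤ →₀ V) :=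
  LinearEquiv.ofLinearMap (projShift p n) (projShift p (-n))
    (by rw [projShift_comp hp, add_neg_cancel, projShift_zero]; rfl)
    (by rw [projShift_comp hp, neg_add_cancel, projShift_zero]; rfl)

lemma isPPU_projShiftEquiv {b : LinearMap.BilinForm k V} (hp : IsIdempotentElem p)
    (hb : b.IsSelfAdjoint p) (n : ℤ) : IsPPU k V b (projShiftEquiv hp n) :=
  ⟨⟨projShift_shift 1 n, Btilde_projShift hp hb n⟩,
    LinearMap.ext fun x => (evalOne_projShift n _).trans (evalOne_single 0 x)⟩

lemma Vneg_le_comap_projShift {n : ℤ} (hn : n ≤ 0) :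
    Vneg k V ≤ (Vneg k V).comap (projShift p n) := by
  intro v hv i hi
  rw [projShift_apply, hv i hi, hv (i - n) (by omega)]
  simp

end ProjShift

section Quotient

/-- The embedding `w ↦ t w` of `V` into `V⊕`, whose range is the kernel of `t⁻¹` on `V⊕`. -/
noncomputable def socleEmb : V →ₗ[k] (ℤ →₀ V) ⧸ Vneg k V :=
  (Vneg k V).mkQ ∘ₗ Finsupp.lsingle 1

variable {k V}

lemma mkQ_Vneg_eq_zero {v : ℤ →₀ V} : (Vneg k V).mkQ v = 0 ↔ ∀ i > 0, v i = 0 :=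
  Submodule.Quotient.mk_eq_zero _

lemma shiftQ_mkQ (v : ℤ →₀ V) :
    shiftQ k V ((Vneg k V).mkQ v) = (Vneg k V).mkQ (shift k V (-1) v) := rfl

lemma shiftQ_pow_mkQ (n : ℕ) (v : ℤ →₀ V) :
    (shiftQ k V ^ n) ((Vneg k V).mkQ v) = (Vneg k V).mkQ (shift k V (-n) v) := by
  induction n generalizing v with
  | zero => rw [Nat.cast_zero, neg_zero, shift_zero, pow_zero, Module.End.one_apply]
  | succ n ih =>
    rw [pow_succ, Module.End.mul_apply, shiftQ_mkQ, ih, shift_shift, Nat.cast_succ, neg_add]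

lemma exists_shiftQ_pow_apply_eq_zero (x : (ℤ →₀ V) ⧸ Vneg k V) :
    ∃ n : ℕ, (shiftQ k V ^ n) x = 0 := by
  obtain ⟨v, rfl⟩ := (Vneg k V).mkQ_surjective x
  obtain ⟨M, hM⟩ := v.support.bddAbove
  refine ⟨M.toNat, ?_⟩
  rw [shiftQ_pow_mkQ, mkQ_Vneg_eq_zero]
  intro i hi
  rw [shift_apply]
  by_contra hvi
  have := hM (Finsupp.mem_support_iff.2 hvi)
  omega

lemma FGSubQ.fg {U : Submodule k ((ℤ →₀ V) ⧸ Vneg k V)} (hU : FGSubQ k V U) : U.FG := by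
  obtain ⟨S, rfl⟩ := hU
  exact fg_span_orbit S.finite_toSet fun s _ => exists_shiftQ_pow_apply_eq_zero s

lemma FGSubQ.mem_invtSubmodule {U : Submodule k ((ℤ →₀ V) ⧸ Vneg k V)} (hU : FGSubQ k V U) :
    U ∈ Module.End.invtSubmodule (shiftQ k V) := by
  obtain ⟨S, rfl⟩ := hU
  exact span_orbit_mem_invtSubmodule (SetLike.coe S)

lemma socleEmb_eq_zero {w : V} : socleEmb k V w = 0 ↔ w = 0 := by
  refine ⟨fun h => ?_, fun h => by rw [h, map_zero]⟩
  simpa using mkQ_Vneg_eq_zero.1 h 1 one_pos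

lemma mkQ_eq_socleEmb {v : ℤ →₀ V} (hv : ∀ i > 1, v i = 0) :
    (Vneg k V).mkQ v = socleEmb k V (v 1) := by
  rw [socleEmb, LinearMap.comp_apply, ← sub_eq_zero, ← map_sub, mkQ_Vneg_eq_zero]
  intro i hi
  rcases eq_or_ne i 1 with rfl | hi1
  · simp
  · simp [hv i (by omega), hi1.symm]

lemma ker_shiftQ_le_range_socleEmb :
    LinearMap.ker (shiftQ k V) ≤ LinearMap.range (socleEmb k V) := by
  intro x hx
  obtain ⟨v, rfl⟩ := (Vneg k V).mkQ_surjective x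
  rw [LinearMap.mem_ker, shiftQ_mkQ, mkQ_Vneg_eq_zero] at hx
  refine ⟨v 1, (mkQ_eq_socleEmb fun i hi => ?_).symm⟩
  simpa [shift_apply] using hx (i - 1) (by omega)

lemma exists_socleEmb_mem {U : Submodule k ((ℤ →₀ V) ⧸ Vneg k V)}
    (hU : U ∈ Module.End.invtSubmodule (shiftQ k V)) (hne : U ≠ ⊥) :
    ∃ w ≠ 0, socleEmb k V w ∈ U := by
  obtain ⟨u, hu, hu0⟩ := U.exists_mem_ne_zero_of_ne_bot hne
  obtain ⟨n, hn⟩ := exists_shiftQ_pow_apply_eq_zero u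
  obtain ⟨x, hxU, hx0, hx⟩ := exists_mem_ker_of_pow_apply_eq_zero hU hu hu0 hn
  obtain ⟨w, rfl⟩ := ker_shiftQ_le_range_socleEmb hx
  exact ⟨w, fun hw => hx0 (socleEmb_eq_zero.2 hw), hxU⟩

/-- The endomorphism of `V⊕` induced by `(1 - p) + t⁻¹ p`. -/
noncomputable def projShiftQ (p : Module.End k V) : Module.End k ((ℤ →₀ V) ⧸ Vneg k V) :=
  Submodule.mapQ _ _ (projShift p (-1)) (Vneg_le_comap_projShift (by norm_num))

lemma projShiftQ_mkQ (p : Module.End k V) (v : ℤ →₀ V) :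
    projShiftQ p ((Vneg k V).mkQ v) = (Vneg k V).mkQ (projShift p (-1) v) := rfl

lemma map_projShiftQ_mem_invtSubmodule (p : Module.End k V)
    {U : Submodule k ((ℤ →₀ V) ⧸ Vneg k V)} (hU : U ∈ Module.End.invtSubmodule (shiftQ k V)) :
    U.map (projShiftQ p) ∈ Module.End.invtSubmodule (shiftQ k V) := by
  rintro _ ⟨x, hx, rfl⟩
  refine ⟨shiftQ k V x, hU hx, ?_⟩
  obtain ⟨v, rfl⟩ := (Vneg k V).mkQ_surjective x
  rw [shiftQ_mkQ, projShiftQ_mkQ, projShiftQ_mkQ, shiftQ_mkQ, projShift_shift]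

lemma ker_projShiftQ {p : Module.End k V} (hp : IsIdempotentElem p) :
    LinearMap.ker (projShiftQ p) = (LinearMap.range p).map (socleEmb k V) := by
  have hpp (x : V) : p (p x) = p x := LinearMap.congr_fun hp x
  apply le_antisymm
  · intro x hx
    obtain ⟨v, rfl⟩ := (Vneg k V).mkQ_surjective x
    rw [LinearMap.mem_ker, projShiftQ_mkQ, mkQ_Vneg_eq_zero] at hx
    have hcoeff (i : ℤ) (hi : 0 < i) : v i - p (v i) + p (v (i + 1)) = 0 := by
      simpa [projShift_apply] using hx i hi
    have hp_succ (i : ℤ) (hi : 0 < i) : p (v (i + 1)) = 0 := by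
      simpa [hpp] using congrArg p (hcoeff i hi)
    have hfix (i : ℤ) (hi : 0 < i) : p (v i) = v i := by
      have h := hcoeff i hi
      rw [hp_succ i hi, add_zero, sub_eq_zero] at h
      exact h.symm
    refine ⟨v 1, ⟨v 1, hfix 1 one_pos⟩, (mkQ_eq_socleEmb fun i hi => ?_).symm⟩
    rw [← hfix i (by omega), ← sub_add_cancel i 1, hp_succ (i - 1) (by omega)]
  · rintro _ ⟨_, ⟨x, rfl⟩, rfl⟩
    rw [LinearMap.mem_ker, socleEmb, LinearMap.comp_apply, projShiftQ_mkQ, mkQ_Vneg_eq_zero]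
    intro i hi
    rcases eq_or_ne i 1 with rfl | hi1
    · simp [projShift_apply, hpp]
    · simp [projShift_apply, hi1.symm, show (1 : ℤ) ≠ i + 1 by omega]

end Quotient

section Surjectivity

variable {k V}

lemma comap_projShift_trans {p : Module.End k V} (hp : IsIdempotentElem p)
    {U : Submodule k ((ℤ →₀ V) ⧸ Vneg k V)} (hU : LinearMap.ker (projShiftQ p) ≤ U)
    {φ : (ℤ →₀ V) ≃ₗ[k] (ℤ →₀ V)}
    (hφ : (Vneg k V).comap φ.toLinearMap = (U.map (projShiftQ p)).comap (Vneg k V).mkQ) :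
    (Vneg k V).comap ((projShiftEquiv hp (-1)).trans φ).toLinearMap = U.comap (Vneg k V).mkQ := by
  calc (Vneg k V).comap ((projShiftEquiv hp (-1)).trans φ).toLinearMap
      = ((Vneg k V).comap φ.toLinearMap).comap (projShift p (-1)) := rfl
    _ = ((U.map (projShiftQ p)).comap (Vneg k V).mkQ).comap (projShift p (-1)) := by rw [hφ]
    _ = ((U.map (projShiftQ p)).comap (projShiftQ p)).comap (Vneg k V).mkQ := rfl
    _ = U.comap (Vneg k V).mkQ := by rw [Submodule.comap_map_eq_self hU]

theorem exists_isPPU_comap_Vneg_eq {b : LinearMap.BilinForm k V} (hsymm : b.IsSymm)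
    (haniso : ∀ v, b v v = 0 → v = 0) (U : Submodule k ((ℤ →₀ V) ⧸ Vneg k V))
    [FiniteDimensional k U] (hU : U ∈ Module.End.invtSubmodule (shiftQ k V)) :
    ∃ φ : (ℤ →₀ V) ≃ₗ[k] (ℤ →₀ V), IsPPU k V b φ ∧
      (Vneg k V).comap φ.toLinearMap = U.comap (Vneg k V).mkQ := by
  induction hd : Module.finrank k U using Nat.strong_induction_on generalizing U with
  | _ d ih =>
    subst hd
    rcases eq_or_ne U ⊥ with rfl | hne
    · exact ⟨LinearEquiv.refl k _, IsPPU.refl, (Submodule.ker_mkQ _).symm⟩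
    obtain ⟨w, hw0, hwU⟩ := exists_socleEmb_mem hU hne
    obtain ⟨p, hp, hpb, hpw⟩ :=
      exists_isSelfAdjoint_projection_span_singleton hsymm (mt (haniso w) hw0)
    have hker : LinearMap.ker (projShiftQ p) = k ∙ socleEmb k V w := by
      rw [ker_projShiftQ hp, hpw, Submodule.map_span, Set.image_singleton]
    have hw_ker : socleEmb k V w ∈ LinearMap.ker (projShiftQ p) :=
      hker ▸ Submodule.mem_span_singleton_self _
    have hlt : Module.finrank k (U.map (projShiftQ p)) < Module.finrank k U :=
      finrank_map_lt_of_mem_ker hwU (mt socleEmb_eq_zero.1 hw0) hw_ker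
    obtain ⟨φ, hφ, hφU⟩ := ih _ hlt _ (map_projShiftQ_mem_invtSubmodule p hU) rfl
    have hkerU : LinearMap.ker (projShiftQ p) ≤ U := by
      rwa [hker, Submodule.span_singleton_le_iff_mem]
    exact ⟨_, (isPPU_projShiftEquiv hp hpb (-1)).trans hφ, comap_projShift_trans hp hkerU hφU⟩

end Surjectivity

theorem stmt12_general (b : LinearMap.BilinForm k V)
    (hsymm : ∀ v w : V, b v w = b w v)
    (haniso : ∀ v : V, b v v = 0 → v = 0)
    (U : Submodule k ((ℤ →₀ V) ⧸ Vneg k V)) (hU : FGSubQ k V U) :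
    ∃ φ : (ℤ →₀ V) ≃ₗ[k] (ℤ →₀ V), PPUneg k V b φ ∧
      ∀ v : ℤ →₀ V, (φ v ∈ Vneg k V ↔ (Vneg k V).mkQ v ∈ U) := by
  have : FiniteDimensional k U := Module.Finite.iff_fg.2 hU.fg
  obtain ⟨φ, hφ, hφU⟩ := exists_isPPU_comap_Vneg_eq ⟨hsymm⟩ haniso U hU.mem_invtSubmodule
  have hmem (v : ℤ →₀ V) : φ v ∈ Vneg k V ↔ (Vneg k V).mkQ v ∈ U := SetLike.ext_iff.1 hφU v
  refine ⟨φ, ⟨hφ, fun x => (hmem (Finsupp.single 0 x)).2 ?_⟩, hmem⟩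
  have hx : (Vneg k V).mkQ (Finsupp.single 0 x) = 0 :=
    mkQ_Vneg_eq_zero.2 fun i hi => Finsupp.single_eq_of_ne hi.ne'
  exact hx ▸ U.zero_mem

/-- `Ω : PPU(b)⁻ → Sub(V⊕)` is surjective: every finitely generated
`k[t⁻¹]`-submodule of `V⊕` is the kernel of the endomorphism of `V⊕` induced by some
`φ ∈ PPU(b)⁻`. -/
theorem stmt12 [FiniteDimensional k V] (b : LinearMap.BilinForm k V)
    (hsymm : ∀ v w : V, b v w = b w v)
    (haniso : ∀ v : V, b v v = 0 → v = 0)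
    (U : Submodule k ((ℤ →₀ V) ⧸ Vneg k V)) (hU : FGSubQ k V U) :
    ∃ φ : (ℤ →₀ V) ≃ₗ[k] (ℤ →₀ V), PPUneg k V b φ ∧
      ∀ v : ℤ →₀ V, (φ v ∈ Vneg k V ↔ (Vneg k V).mkQ v ∈ U) :=
  stmt12_general k V b hsymm haniso U hU
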